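/- Let r ≥ 2 and let k_i, k_i' ≥ 0 for 2 ≤ i ≤ r − 1 and j_1 ≥ 1 odd, with j_i := k_i + k_i' for 2 ≤ i ≤ r − 1 and j_{r−1} ≥ 1. Let n = 2^{r−1} j_{r−1} + ⋯ + 4 j_2 + 2 j_1 + 1, and let B ∈ GL(n, ℤ) be the block-diagonal matrix B = diag(C_{r−1}, …, C_{r−1} (k_{r−1} copies), J_{r−1}, …, J_{r−1} (k_{r−1}' copies), …, C_2, …, C_2 (k_2 copies), J_2, …, J_2 (k_2' copies), J_1, …, J_1 (j_1 copies), 1). Let Γ be the subgroup of the group of affine bijections of ℝ^n generated by γ : x ↦ Bx + (1/2^r) e_n together with all translations by vectors in ℤ^n. Then the group of all group homomorphisms Γ → ℤ/2ℤ is isomorphic to (ℤ/2ℤ)^{j_{r−1} + ⋯ + j_2 + j_1 + 1}; in particular it has exactly 2^{j_{r−1} + ⋯ + j_1 + 1} elements. -/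

import Mathlib

open Matrix

/-- `Cmat r` is the `2^r × 2^r` companion matrix of `X^(2^r) + 1`. -/
def Cmat (r : ℕ) : Matrix (Fin (2 ^ r)) (Fin (2 ^ r)) ℤ :=
  Matrix.of fun i j =>
    if (i : ℕ) = (j : ℕ) + 1 then 1
    else if (i : ℕ) = 0 ∧ (j : ℕ) = 2 ^ r - 1 then -1
    else 0

/-- The matrices `J_r`, defined recursively: `J_0 = (−1)` and
`J_{r+1} = [[0, J_r], [I, 0]]` as a `2^(r+1) × 2^(r+1)` block matrix. -/
def Jmat : (r : ℕ) → Matrix (Fin (2 ^ r)) (Fin (2 ^ r)) ℤ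
  | 0 => Matrix.of fun _ _ => -1
  | (r + 1) =>
      Matrix.reindex
        ((finSumFinEquiv (m := 2 ^ r) (n := 2 ^ r)).trans
          (finCongr (show 2 ^ r + 2 ^ r = 2 ^ (r + 1) by rw [pow_succ]; omega)))
        ((finSumFinEquiv (m := 2 ^ r) (n := 2 ^ r)).trans
          (finCongr (show 2 ^ r + 2 ^ r = 2 ^ (r + 1) by rw [pow_succ]; omega)))
        (Matrix.fromBlocks 0 (Jmat r) 1 0)

/-- Index type for the diagonal blocks of the matrix
`B = diag(C_{r−1} (k_{r−1} copies), J_{r−1} (k'_{r−1} copies), …,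
C_2 (k_2 copies), J_2 (k'_2 copies), J_1 (j₁ copies), 1)`:
for each `i` with `2 ≤ i ≤ r − 1` (encoded as `i₀ + 2` with `i₀ : Fin (r − 2)`) there are
`k i` blocks `C_i` and `k' i` blocks `J_i`; then `j₁` blocks `J_1`; then one `1 × 1` block. -/
abbrev BlockIx (r : ℕ) (k k' : ℕ → ℕ) (j₁ : ℕ) : Type :=
  (Σ i : Fin (r - 2), (Fin (k (i.val + 2)) ⊕ Fin (k' (i.val + 2)))) ⊕ (Fin j₁ ⊕ Unit)

/-- The size of each diagonal block. -/
def blockSize (r : ℕ) (k k' : ℕ → ℕ) (j₁ : ℕ) : BlockIx r k k' j₁ → ℕ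
  | Sum.inl ⟨i, _⟩ => 2 ^ (i.val + 2)
  | Sum.inr (Sum.inl _) => 2 ^ 1
  | Sum.inr (Sum.inr _) => 2 ^ 0

/-- The diagonal blocks themselves. -/
def blockMat (r : ℕ) (k k' : ℕ → ℕ) (j₁ : ℕ) :
    (x : BlockIx r k k' j₁) →
      Matrix (Fin (blockSize r k k' j₁ x)) (Fin (blockSize r k k' j₁ x)) ℤ
  | Sum.inl ⟨i, Sum.inl _⟩ => Cmat (i.val + 2)
  | Sum.inl ⟨i, Sum.inr _⟩ => Jmat (i.val + 2)
  | Sum.inr (Sum.inl _) => Jmat 1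
  | Sum.inr (Sum.inr _) => 1

/-!
Conjugation by `γ` acts on the translation lattice `ℤ^n` by `B`, and `γ ^ 2^r` is the translation by
`e_n` because `B ^ 2^r = 1` and `B e_n = e_n`. Hence `Γ` is the quotient of `ℤ^n ⋊ ℤ` by this single
relation, and a homomorphism from `Γ` to a group of exponent two is a `B`-invariant functional on
`ℤ^n` vanishing at `e_n` together with an arbitrary value at `γ`. Modulo two each block of `B`
permutes its basis vectors in a single cycle, so the invariant functionals are those constant on
every block: one free value per block, the value at `γ` taking the place of the last block.
-/

section CyclicExtension

variable {L G A : Type*} [Group L] [Group G] [CommGroup A]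

theorem map_zpow_apply_eq_conj {τ : L →* G} {g : G} {α : MulAut L}
    (hα : ∀ v, τ (α v) = g * τ v * g⁻¹) (i : ℤ) (v : L) :
    τ ((α ^ i) v) = g ^ i * τ v * (g ^ i)⁻¹ := by
  have hinv (u : L) : τ (α⁻¹ u) = g⁻¹ * τ u * g := by
    have h := hα (α⁻¹ u)
    rw [MulAut.apply_inv_self] at h
    rw [h]
    group
  induction i with
  | zero => simp
  | succ i ih =>
    rw [add_comm, _root_.zpow_one_add, _root_.zpow_one_add, MulAut.mul_apply, hα, ih]
    group
  | pred i ih =>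
    rw [sub_eq_neg_add, _root_.zpow_add, _root_.zpow_add, _root_.zpow_neg_one, _root_.zpow_neg_one,
      MulAut.mul_apply, hinv, ih]
    group

/-- The homomorphism `(v, i) ↦ τ v * g ^ i` on the semidirect product `L ⋊ ℤ` in which the
generator of `ℤ` acts on `L` by `α`, defined when conjugation by `g` realizes `α`. -/
def semidirectLift (τ : L →* G) (g : G) (α : MulAut L) (hα : ∀ v, τ (α v) = g * τ v * g⁻¹) :
    L ⋊[zpowersHom (MulAut L) α] Multiplicative ℤ →* G :=
  SemidirectProduct.lift τ (zpowersHom G g) fun i =>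
    MonoidHom.ext fun v => map_zpow_apply_eq_conj hα i.toAdd v

theorem semidirectLift_apply (τ : L →* G) (g : G) (α : MulAut L)
    (hα : ∀ v, τ (α v) = g * τ v * g⁻¹) (x : L ⋊[zpowersHom (MulAut L) α] Multiplicative ℤ) :
    semidirectLift τ g α hα x = τ x.left * g ^ x.right.toAdd := rfl

theorem semidirectLift_surjective {τ : L →* G} {g : G} {α : MulAut L}
    (hα : ∀ v, τ (α v) = g * τ v * g⁻¹)
    (hgen : Subgroup.closure ({g} ∪ Set.range τ) = ⊤) :
    Function.Surjective (semidirectLift τ g α hα) := by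
  rw [← MonoidHom.range_eq_top, eq_top_iff, ← hgen, Subgroup.closure_le]
  rintro _ (rfl | ⟨v, rfl⟩)
  · exact ⟨SemidirectProduct.inr (Multiplicative.ofAdd 1), by simp [semidirectLift_apply]⟩
  · exact ⟨SemidirectProduct.inl v, by simp [semidirectLift_apply]⟩

/-- `G` is presented as the quotient of `L ⋊ ℤ` by the relation `g ^ m = τ w`, so a homomorphism
out of `L ⋊ ℤ` descends to `G` as soon as it respects that relation. -/
theorem exists_monoidHom_extension_iff {τ : L →* G} (hτ : Function.Injective τ) {g : G}
    (hgen : Subgroup.closure ({g} ∪ Set.range τ) = ⊤) {α : MulAut L}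
    (hα : ∀ v, τ (α v) = g * τ v * g⁻¹) {m : ℕ} {w : L} (hw : g ^ m = τ w)
    (hm : ∀ i : ℤ, g ^ i ∈ τ.range → (m : ℤ) ∣ i) (a : L →* A) (c : A) :
    (∃ φ : G →* A, φ.comp τ = a ∧ φ g = c) ↔ (∀ v, a (α v) = a v) ∧ c ^ m = a w := by
  constructor
  · rintro ⟨φ, rfl, rfl⟩
    exact ⟨fun v => by simp [hα], by simp [← map_pow, hw]⟩
  · rintro ⟨ha, hc⟩
    have ha' (v : L) : a (α v) = c * a v * c⁻¹ := by rw [ha, mul_inv_cancel_comm]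
    have hker : (semidirectLift τ g α hα).ker ≤ (semidirectLift a c α ha').ker := by
      rintro ⟨v, i⟩ hx
      have hv : τ v = (g ^ i.toAdd)⁻¹ := eq_inv_of_mul_eq_one_left hx
      obtain ⟨q, hq⟩ := hm i.toAdd ⟨v⁻¹, by rw [map_inv, hv, inv_inv]⟩
      obtain rfl : v = (w ^ q)⁻¹ := hτ <| by
        rw [hv, hq, _root_.zpow_mul, zpow_natCast, hw, map_inv, map_zpow]
      rw [MonoidHom.mem_ker, semidirectLift_apply, hq, _root_.zpow_mul, zpow_natCast, hc, map_inv,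
        map_zpow, inv_mul_cancel]
    let φ := (semidirectLift τ g α hα).liftOfSurjective (semidirectLift_surjective hα hgen)
      ⟨semidirectLift a c α ha', hker⟩
    have hφ (x) : φ (semidirectLift τ g α hα x) = semidirectLift a c α ha' x :=
      MonoidHom.liftOfRightInverse_comp_apply _ _ _ _ _
    refine ⟨φ, MonoidHom.ext fun v => ?_, ?_⟩
    · simpa [semidirectLift_apply] using hφ (SemidirectProduct.inl v)
    · simpa [semidirectLift_apply] using hφ (SemidirectProduct.inr (Multiplicative.ofAdd 1))

end CyclicExtension

section LatticeHom

variable {ι κ A : Type*} [AddCommGroup A]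

theorem latticeHom_ext [Finite ι] [DecidableEq ι]
    {f g : Multiplicative (ι → ℤ) →* Multiplicative A}
    (h : ∀ i, f (.ofAdd (Pi.single i 1)) = g (.ofAdd (Pi.single i 1))) : f = g := by
  obtain ⟨f, rfl⟩ := AddMonoidHom.toMultiplicative.surjective f
  obtain ⟨g, rfl⟩ := AddMonoidHom.toMultiplicative.surjective g
  exact congrArg _ (AddMonoidHom.functions_ext' _ _ _ fun i => AddMonoidHom.ext_int (h i))

variable [Fintype ι]

/-- The homomorphism `ℤ^ι → A`, in multiplicative notation, sending the `i`-th basis vector to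
`a i`. -/
def latticeHom (a : ι → A) : Multiplicative (ι → ℤ) →* Multiplicative A :=
  (Fintype.linearCombination ℤ a).toAddMonoidHom.toMultiplicative

theorem latticeHom_ofAdd (a : ι → A) (v : ι → ℤ) :
    latticeHom a (.ofAdd v) = .ofAdd (∑ i, v i • a i) := rfl

theorem latticeHom_single [DecidableEq ι] (a : ι → A) (i : ι) :
    latticeHom a (.ofAdd (Pi.single i 1)) = .ofAdd (a i) := by
  simp [latticeHom, Fintype.linearCombination_apply_single]

theorem latticeHom_mulVec (M : Matrix ι ι ℤ) (a : ι → A) (v : ι → ℤ) :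
    latticeHom a (.ofAdd (M *ᵥ v)) = latticeHom (fun j => ∑ i, M i j • a i) (.ofAdd v) := by
  simp only [latticeHom_ofAdd, mulVec, dotProduct, Finset.sum_smul, Finset.smul_sum, smul_smul,
    mul_comm]
  rw [Finset.sum_comm]

/-- Invariance of the homomorphism `latticeHom a : ℤ^ι → A` under precomposition with the integer
matrix `M`, expressed on basis vectors. -/
def InvariantUnder (M : Matrix ι ι ℤ) (a : ι → A) : Prop :=
  ∀ j, ∑ i, M i j • a i = a j

theorem invariantUnder_iff_latticeHom_mulVec {M : Matrix ι ι ℤ} {a : ι → A} :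
    InvariantUnder M a ↔ ∀ v, latticeHom a (.ofAdd (M *ᵥ v)) = latticeHom a (.ofAdd v) := by
  classical
  simp only [latticeHom_mulVec]
  refine ⟨fun h v => by rw [funext h], fun h j => ?_⟩
  simpa only [latticeHom_single, Multiplicative.ofAdd.apply_eq_iff_eq] using h (Pi.single j 1)

theorem invariantUnder_one [DecidableEq ι] (a : ι → A) : InvariantUnder 1 a := by
  simp [InvariantUnder, Matrix.one_apply]

theorem invariantUnder_reindex [Fintype κ] (e : ι ≃ κ) {M : Matrix ι ι ℤ} {a : κ → A} :
    InvariantUnder (reindex e e M) a ↔ InvariantUnder M (a ∘ e) := by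
  simp [InvariantUnder, ← e.sum_comp, e.forall_congr_left]

theorem invariantUnder_blockDiagonal' {o : Type*} {n : o → Type*} [Fintype o] [DecidableEq o]
    [∀ x, Fintype (n x)] {M : ∀ x, Matrix (n x) (n x) ℤ} {a : (Σ x, n x) → A} :
    InvariantUnder (blockDiagonal' M) a ↔ ∀ x, InvariantUnder (M x) fun i => a ⟨x, i⟩ := by
  simp only [InvariantUnder, Sigma.forall, Fintype.sum_sigma]
  refine forall₂_congr fun x j => ?_
  rw [Fintype.sum_eq_single x fun y hy => Finset.sum_eq_zero fun i _ => by
    rw [blockDiagonal'_apply_ne M i j hy, zero_smul]]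
  simp only [blockDiagonal'_apply_eq]

end LatticeHom

section ScrewGroup

variable {ι : Type*}

/-- The lattice `ℤ^ι` acting on `ℝ^ι` by translations. -/
def latticeTranslation : Multiplicative (ι → ℤ) →* ((ι → ℝ) ≃ᵃ[ℝ] (ι → ℝ)) :=
  (AffineEquiv.constVAddHom ℝ (ι → ℝ)).comp
    ((Int.castAddHom ℝ).compLeft ι).toMultiplicative

theorem latticeTranslation_apply (v : Multiplicative (ι → ℤ)) (x : ι → ℝ) :
    latticeTranslation v x = (fun i => (v.toAdd i : ℝ)) + x := rfl

theorem latticeTranslation_injective :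
    Function.Injective (latticeTranslation : Multiplicative (ι → ℤ) →* _) := by
  intro v w h
  refine Multiplicative.toAdd.injective (funext fun i => ?_)
  simpa [latticeTranslation_apply] using congrFun (congrArg (fun f => f 0) h) i

variable [Fintype ι] [DecidableEq ι]

/-- The linear action of `GL(ι, ℤ)` on `ℝ^ι`. -/
def integralLinearAction : GL ι ℤ →* ((ι → ℝ) ≃ᵃ[ℝ] (ι → ℝ)) where
  toFun B := (LinearMap.GeneralLinearGroup.toLinearEquiv (Matrix.GeneralLinearGroup.toLin
    (Units.map (RingHom.mapMatrix (Int.castRingHom ℝ)).toMonoidHom B))).toAffineEquiv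
  map_one' := by rw [map_one, map_one]; rfl
  map_mul' B C := by rw [map_mul, map_mul]; rfl

theorem integralLinearAction_apply (B : GL ι ℤ) (x : ι → ℝ) :
    integralLinearAction B x = B.1.map (Int.cast : ℤ → ℝ) *ᵥ x := rfl

theorem integralLinearAction_apply_intCast (B : GL ι ℤ) (v : ι → ℤ) :
    integralLinearAction B (fun i => (v i : ℝ)) = fun i => ((B.1 *ᵥ v) i : ℝ) := by
  ext; simp [integralLinearAction_apply, mulVec, dotProduct]

/-- The affine bijection `x ↦ B x + t`. -/
def screwMotion (B : GL ι ℤ) (t : ι → ℝ) : (ι → ℝ) ≃ᵃ[ℝ] (ι → ℝ) :=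
  (integralLinearAction B).trans (AffineEquiv.constVAdd ℝ (ι → ℝ) t)

theorem screwMotion_apply (B : GL ι ℤ) (t x : ι → ℝ) :
    screwMotion B t x = t + integralLinearAction B x := rfl

theorem screwMotion_zpow_apply {B : GL ι ℤ} {t : ι → ℝ} (ht : integralLinearAction B t = t) (i : ℤ)
    (x : ι → ℝ) : (screwMotion B t ^ i) x = i • t + integralLinearAction (B ^ i) x := by
  have hcomm : Commute (AffineEquiv.constVAdd ℝ (ι → ℝ) t) (integralLinearAction B) := by
    ext x j
    simp only [AffineEquiv.coe_mul, Function.comp_apply, AffineEquiv.constVAdd_apply, vadd_eq_add,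
      integralLinearAction_apply, mulVec_add] at ht ⊢
    rw [ht]
  have hmul : screwMotion B t = AffineEquiv.constVAdd ℝ (ι → ℝ) t * integralLinearAction B := rfl
  rw [hmul, hcomm.mul_zpow, ← AffineEquiv.constVAdd_zsmul, map_zpow]
  rfl

theorem latticeTranslation_mulVec_eq_conj (B : GL ι ℤ) (t : ι → ℝ) (v : ι → ℤ) :
    latticeTranslation (.ofAdd (B.1 *ᵥ v)) =
      screwMotion B t * latticeTranslation (.ofAdd v) * (screwMotion B t)⁻¹ := by
  rw [eq_mul_inv_iff_mul_eq]
  ext x : 1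
  simp only [AffineEquiv.coe_mul, Function.comp_apply, latticeTranslation_apply, screwMotion_apply,
    toAdd_ofAdd, ← integralLinearAction_apply_intCast]
  simp only [integralLinearAction_apply, mulVec_add, add_left_comm]

/-- The group of affine bijections of `ℝ^ι` generated by `x ↦ B x + t` and the translations by
`ℤ^ι`. -/
def screwGroup (B : GL ι ℤ) (t : ι → ℝ) : Subgroup ((ι → ℝ) ≃ᵃ[ℝ] (ι → ℝ)) :=
  Subgroup.closure ({screwMotion B t} ∪ Set.range latticeTranslation)

namespace screwGroup

/-- The generator `x ↦ B x + t` of `screwGroup B t`. -/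
def motion (B : GL ι ℤ) (t : ι → ℝ) : screwGroup B t :=
  ⟨screwMotion B t, Subgroup.subset_closure (.inl rfl)⟩

/-- The translations by `ℤ^ι`, as elements of `screwGroup B t`. -/
def translation (B : GL ι ℤ) (t : ι → ℝ) : Multiplicative (ι → ℤ) →* screwGroup B t :=
  latticeTranslation.codRestrict _ fun v => Subgroup.subset_closure (.inr ⟨v, rfl⟩)

theorem translation_injective (B : GL ι ℤ) (t : ι → ℝ) : Function.Injective (translation B t) :=
  fun _ _ h => latticeTranslation_injective (congrArg Subtype.val h)

theorem closure_motion_translation (B : GL ι ℤ) (t : ι → ℝ) :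
    Subgroup.closure ({motion B t} ∪ Set.range (translation B t)) = ⊤ := by
  refine (congrArg Subgroup.closure ?_).trans Subgroup.closure_closure_coe_preimage
  ext x
  simp only [Set.mem_union, Set.mem_singleton_iff, Set.mem_range, Subtype.ext_iff]
  rfl

variable {B : GL ι ℤ} {t : ι → ℝ} {A : Type*} [AddCommGroup A]

/-- The values of `φ` on the translations by the standard basis of `ℤ^ι`. -/
def basisValues (φ : screwGroup B t →* Multiplicative A) (i : ι) : A :=
  (φ (translation B t (.ofAdd (Pi.single i 1)))).toAdd

theorem comp_translation (φ : screwGroup B t →* Multiplicative A) :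
    φ.comp (translation B t) = latticeHom (basisValues φ) :=
  latticeHom_ext fun i => (latticeHom_single (basisValues φ) i).symm

theorem hom_ext {φ ψ : screwGroup B t →* Multiplicative A} (hbasis : basisValues φ = basisValues ψ)
    (hmotion : φ (motion B t) = ψ (motion B t)) : φ = ψ := by
  have hlat : φ.comp (translation B t) = ψ.comp (translation B t) := by
    rw [comp_translation, comp_translation, hbasis]
  refine MonoidHom.eq_of_eqOn_dense (closure_motion_translation B t) ?_
  rintro _ (rfl | ⟨v, rfl⟩)
  exacts [hmotion, DFunLike.congr_fun hlat v]

variable {m : ℕ} {l : ι} {d : ℝ}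

theorem integralLinearAction_single (hBl : B.1 *ᵥ Pi.single l 1 = Pi.single l 1) (d : ℝ) :
    integralLinearAction B (Pi.single l d) = Pi.single l d := by
  have hcol (i : ι) : B.1 i l = (Pi.single l 1 : ι → ℤ) i := by
    simpa only [mulVec_single_one, col_apply] using congrFun hBl i
  ext i
  by_cases hi : i = l <;> simp [integralLinearAction_apply, hcol, hi]

theorem motion_pow (hd : m * d = 1) (hBl : B.1 *ᵥ Pi.single l 1 = Pi.single l 1)
    (hBm : B ^ m = 1) :
    motion B (Pi.single l d) ^ m = translation B _ (.ofAdd (Pi.single l 1)) := by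
  refine Subtype.ext (AffineEquiv.ext fun x => ?_)
  have h := screwMotion_zpow_apply (integralLinearAction_single hBl d) m x
  rw [zpow_natCast, zpow_natCast, hBm, map_one, natCast_zsmul, ← Pi.single_smul, nsmul_eq_mul,
    hd] at h
  refine h.trans (congrArg (· + x) (funext fun i => ?_))
  by_cases hi : i = l <;> simp [hi]

theorem dvd_of_motion_zpow_mem_range_translation (hd : m * d = 1)
    (hBl : B.1 *ᵥ Pi.single l 1 = Pi.single l 1) {i : ℤ}
    (hi : motion B (Pi.single l d) ^ i ∈ (translation B (Pi.single l d)).range) :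
    (m : ℤ) ∣ i := by
  obtain ⟨v, hv⟩ := hi
  have h := screwMotion_zpow_apply (integralLinearAction_single hBl d) i 0
  have hv0 : latticeTranslation v 0 = (screwMotion B (Pi.single l d) ^ i) 0 :=
    congrArg (fun g => (g : (ι → ℝ) ≃ᵃ[ℝ] (ι → ℝ)) 0) (congrArg Subtype.val hv)
  have hl : (v.toAdd l : ℝ) = i * d := by
    simpa [latticeTranslation_apply, h, integralLinearAction_apply, -map_zpow] using congrFun hv0 l
  refine ⟨v.toAdd l, ?_⟩
  have : (i : ℝ) = m * v.toAdd l := by rw [hl, mul_left_comm, hd, mul_one]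
  exact_mod_cast this

theorem exists_hom_iff (hd : m * d = 1) (hBl : B.1 *ᵥ Pi.single l 1 = Pi.single l 1)
    (hBm : B ^ m = 1) (a : ι → A) (c : A) :
    (∃ φ : screwGroup B (Pi.single l d) →* Multiplicative A,
      φ.comp (translation B _) = latticeHom a ∧ φ (motion B _) = .ofAdd c) ↔
    InvariantUnder B.1 a ∧ m • c = a l := by
  let α : MulAut (Multiplicative (ι → ℤ)) :=
    (LinearMap.GeneralLinearGroup.toLinearEquiv
      (Matrix.GeneralLinearGroup.toLin B)).toAddEquiv.toMultiplicative
  have hα (v) : translation B (Pi.single l d) (α v) =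
      motion B _ * translation B _ v * (motion B _)⁻¹ :=
    Subtype.ext (latticeTranslation_mulVec_eq_conj B _ v.toAdd)
  rw [exists_monoidHom_extension_iff (translation_injective B _) (closure_motion_translation B _)
    hα (motion_pow hd hBl hBm) (fun _ => dvd_of_motion_zpow_mem_range_translation hd hBl),
    invariantUnder_iff_latticeHom_mulVec, latticeHom_single, ← ofAdd_nsmul,
    Multiplicative.ofAdd.apply_eq_iff_eq]
  rfl

theorem invariantUnder_of_hom (hd : m * d = 1) (hBl : B.1 *ᵥ Pi.single l 1 = Pi.single l 1)
    (hBm : B ^ m = 1) (φ : screwGroup B (Pi.single l d) →* Multiplicative A) :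
    InvariantUnder B.1 (basisValues φ) ∧ m • (φ (motion B _)).toAdd = basisValues φ l :=
  (exists_hom_iff hd hBl hBm _ _).1 ⟨φ, comp_translation φ, rfl⟩

variable {β : Type*} {blk : ι → β} {rep : β → ι}

/-- One value of a homomorphism per block: that at a representative basis vector, except on the
block `x₀` of the screw direction, where the value at `motion` is taken. -/
def blockValues [DecidableEq β] (rep : β → ι) (x₀ : β) :
    (screwGroup B t →* Multiplicative A) →* Multiplicative (β → A) where
  toFun φ := .ofAdd (Function.update (basisValues φ ∘ rep) x₀ (φ (motion B t)).toAdd)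
  map_one' := Function.update_eq_self (f := fun _ => (0 : A)) x₀
  map_mul' φ ψ := Function.update_add (basisValues φ ∘ rep) (basisValues ψ ∘ rep) x₀ _ _

theorem blockValues_injective [DecidableEq β] (hd : m * d = 1)
    (hBl : B.1 *ᵥ Pi.single l 1 = Pi.single l 1) (hBm : B ^ m = 1)
    (hrep : Function.RightInverse rep blk) (hl : ∀ i, blk i = blk l → i = l)
    (hinv : ∀ a : ι → A, InvariantUnder B.1 a → a.FactorsThrough blk) :
    Function.Injective (blockValues rep (blk l) :
      (screwGroup B (Pi.single l d) →* Multiplicative A) →* _) := by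
  rw [injective_iff_map_eq_one]
  intro φ hφ
  obtain ⟨hφinv, hφl⟩ := invariantUnder_of_hom hd hBl hBm φ
  have hval (x : β) :
      Function.update (basisValues φ ∘ rep) (blk l) (φ (motion B _)).toAdd x = 0 := congrFun hφ x
  have hmotion : (φ (motion B _)).toAdd = 0 := by simpa using hval (blk l)
  refine hom_ext (funext fun i => ?_) hmotion
  change basisValues φ i = 0
  by_cases hi : blk i = blk l
  · rw [hl i hi, ← hφl, hmotion, smul_zero]
  · rw [hinv _ hφinv (hrep (blk i)).symm]
    simpa [hi] using hval (blk i)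

theorem blockValues_surjective [DecidableEq β] (hd : m * d = 1)
    (hBl : B.1 *ᵥ Pi.single l 1 = Pi.single l 1) (hBm : B ^ m = 1)
    (hmA : ∀ c : A, m • c = 0) (hrep : Function.RightInverse rep blk)
    (hinv : ∀ a : ι → A, a.FactorsThrough blk → InvariantUnder B.1 a) :
    Function.Surjective (blockValues rep (blk l) :
      (screwGroup B (Pi.single l d) →* Multiplicative A) →* _) := by
  intro s
  let a : ι → A := Function.update s.toAdd (blk l) 0 ∘ blk
  have ha : InvariantUnder B.1 a :=
    hinv a fun i j hij => congrArg (Function.update s.toAdd (blk l) 0) hij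
  have hal : m • s.toAdd (blk l) = a l := by simp [a, hmA]
  obtain ⟨φ, hφ, hmotion⟩ := (exists_hom_iff hd hBl hBm a _).2 ⟨ha, hal⟩
  have hbasis : basisValues φ = a := funext fun i =>
    (DFunLike.congr_fun hφ (.ofAdd (Pi.single i 1))).trans (latticeHom_single a i)
  refine ⟨φ, ?_⟩
  change Function.update (basisValues φ ∘ rep) (blk l) (φ (motion B _)).toAdd = s.toAdd
  rw [hbasis, hmotion, Function.comp_assoc, hrep.comp_eq_id, Function.comp_id, toAdd_ofAdd,
    Function.update_idem, Function.update_eq_self]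

theorem nonempty_hom_mulEquiv (hd : m * d = 1) (hBl : B.1 *ᵥ Pi.single l 1 = Pi.single l 1)
    (hBm : B ^ m = 1) (hmA : ∀ c : A, m • c = 0) (hblk : blk.Surjective)
    (hl : ∀ i, blk i = blk l → i = l)
    (hinv : ∀ a : ι → A, InvariantUnder B.1 a ↔ a.FactorsThrough blk) :
    Nonempty ((screwGroup B (Pi.single l d) →* Multiplicative A) ≃* Multiplicative (β → A)) := by
  classical
  obtain ⟨rep, hrep⟩ := hblk.hasRightInverse
  exact ⟨MulEquiv.ofBijective (blockValues rep (blk l))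
    ⟨blockValues_injective hd hBl hBm hrep hl fun a => (hinv a).1,
      blockValues_surjective hd hBl hBm hmA hrep fun a => (hinv a).2⟩⟩

end screwGroup

end ScrewGroup

section ReindexedBlockDiagonal

variable {o ι R A : Type*} {n : o → Type*} [DecidableEq o] [Fintype ι]

theorem reindex_blockDiagonal'_pow_eq_one [Finite o] [∀ x, Fintype (n x)]
    [∀ x, DecidableEq (n x)] [DecidableEq ι] [CommSemiring R] (e : (Σ x, n x) ≃ ι)
    {M : ∀ x, Matrix (n x) (n x) R} {m : ℕ} (hM : ∀ x, M x ^ m = 1) :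
    reindex e e (blockDiagonal' M) ^ m = 1 := by
  cases nonempty_fintype o
  rw [← coe_reindexAlgEquiv R R, ← map_pow, ← blockDiagonal'_pow,
    show M ^ m = 1 from funext hM, blockDiagonal'_one, map_one]

theorem reindex_blockDiagonal'_mulVec_single [∀ x, DecidableEq (n x)] [DecidableEq ι]
    [NonAssocSemiring R] (e : (Σ x, n x) ≃ ι) {M : ∀ x, Matrix (n x) (n x) R} {x : o}
    (hM : M x = 1) (i : n x) :
    reindex e e (blockDiagonal' M) *ᵥ Pi.single (e ⟨x, i⟩) 1 = Pi.single (e ⟨x, i⟩) 1 := by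
  have hcol (y : Σ x, n x) :
      blockDiagonal' M y ⟨x, i⟩ = (Pi.single ⟨x, i⟩ 1 : (Σ x, n x) → R) y := by
    obtain ⟨y, j⟩ := y
    by_cases hy : y = x
    · subst hy
      simp [blockDiagonal'_apply_eq, hM, Matrix.one_apply, Pi.single_apply]
    · rw [blockDiagonal'_apply_ne M j i hy, Pi.single_eq_of_ne fun h => hy (congrArg Sigma.fst h)]
  ext y
  obtain ⟨y, rfl⟩ := e.surjective y
  simp [hcol, Pi.single_apply]

theorem invariantUnder_reindex_blockDiagonal'_iff [Finite o] [∀ x, Fintype (n x)]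
    [AddCommGroup A] (e : (Σ x, n x) ≃ ι) {M : ∀ x, Matrix (n x) (n x) ℤ}
    (hM : ∀ x (b : n x → A), InvariantUnder (M x) b ↔ ∀ i j, b i = b j) {a : ι → A} :
    InvariantUnder (reindex e e (blockDiagonal' M)) a ↔
      a.FactorsThrough fun i => (e.symm i).1 := by
  cases nonempty_fintype o
  simp only [invariantUnder_reindex, invariantUnder_blockDiagonal', hM]
  constructor
  · intro h y z hyz
    obtain ⟨⟨x, i⟩, rfl⟩ := e.surjective y
    obtain ⟨⟨x', i'⟩, rfl⟩ := e.surjective z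
    obtain rfl : x = x' := by simpa using hyz
    exact h x i i'
  · exact fun h x i i' => h (by simp)

end ReindexedBlockDiagonal

section Blocks

theorem pow_two_pow_eq_one_of_pow_eq_neg_one {R : Type*} [Ring R] {x : R} {i r : ℕ}
    (h : x ^ 2 ^ i = -1) (hi : i < r) : x ^ 2 ^ r = 1 := by
  obtain ⟨d, rfl⟩ := Nat.exists_eq_add_of_lt hi
  rw [add_right_comm, pow_add, pow_add, pow_mul, pow_mul, h, pow_one, neg_one_sq, one_pow]

variable {A : Type*} [AddCommGroup A] [Module (ZMod 2) A]

theorem invariantUnder_neg {ι : Type*} [Fintype ι] {M : Matrix ι ι ℤ} {a : ι → A} :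
    InvariantUnder (-M) a ↔ InvariantUnder M a := by
  simp [InvariantUnder, ZModModule.neg_eq_self]

theorem Cmat_apply (r : ℕ) (i j : Fin (2 ^ r)) :
    Cmat r i j = if i = j + 1 then (if j.val + 1 = 2 ^ r then -1 else 1) else 0 := by
  have hj := j.isLt
  have hi := i.isLt
  have hval : (j + 1).val = if j.val + 1 = 2 ^ r then 0 else j.val + 1 := by
    rw [Fin.val_add, Fin.val_one', Nat.add_mod_mod]
    split_ifs with h
    · rw [h, Nat.mod_self]
    · exact Nat.mod_eq_of_lt (by omega)
  simp only [Cmat, of_apply, Fin.ext_iff, hval]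
  split_ifs <;> first | rfl | omega

theorem Cmat_mulVec_single (r : ℕ) (j : Fin (2 ^ r)) :
    Cmat r *ᵥ Pi.single j 1 = Pi.single (j + 1) (if j.val + 1 = 2 ^ r then -1 else 1) := by
  ext i
  rw [mulVec_single_one, col_apply, Cmat_apply, Pi.single_apply]

theorem Cmat_pow_mulVec_single_zero {r m : ℕ} (hm : m < 2 ^ r) :
    Cmat r ^ m *ᵥ Pi.single 0 1 = Pi.single ⟨m, hm⟩ 1 := by
  induction m with
  | zero => rw [pow_zero, one_mulVec]; rfl
  | succ m ih =>
    rw [pow_succ', ← mulVec_mulVec, ih (by omega), Cmat_mulVec_single,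
      if_neg (by simpa using hm.ne)]
    congr 1
    simp [Fin.ext_iff, Fin.val_add, Nat.mod_eq_of_lt hm]

theorem Cmat_pow (r : ℕ) : Cmat r ^ 2 ^ r = -1 := by
  have hzero : Cmat r ^ 2 ^ r *ᵥ Pi.single 0 1 = -Pi.single 0 1 := by
    obtain ⟨m, hm⟩ : ∃ m, 2 ^ r = m + 1 := Nat.exists_eq_succ_of_ne_zero (NeZero.ne _)
    have hpow : Cmat r ^ 2 ^ r = Cmat r * Cmat r ^ m := by rw [← pow_succ', ← hm]
    have hlast : (⟨m, by omega⟩ + 1 : Fin (2 ^ r)) = 0 := by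
      simp [Fin.ext_iff, Fin.val_add, ← hm]
    rw [hpow, ← mulVec_mulVec, Cmat_pow_mulVec_single_zero (by omega), Cmat_mulVec_single,
      if_pos hm.symm, hlast, Pi.single_neg]
  refine ext_of_mulVec_single fun i => ?_
  rw [← Cmat_pow_mulVec_single_zero i.isLt, mulVec_mulVec, ← pow_add, add_comm, pow_add,
    ← mulVec_mulVec, hzero, mulVec_neg, neg_mulVec, one_mulVec]

theorem Jmat_zero : Jmat 0 = -1 := by
  ext i j
  obtain rfl : i = j := Subsingleton.elim (α := Fin 1) i j
  simp [Jmat]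

theorem Jmat_pow (r : ℕ) : Jmat r ^ 2 ^ r = -1 := by
  induction r with
  | zero => exact (pow_one (Jmat 0)).trans Jmat_zero
  | succ r ih =>
    have hblock :
        fromBlocks 0 (Jmat r) (1 : Matrix (Fin (2 ^ r)) (Fin (2 ^ r)) ℤ) 0 ^ 2 ^ (r + 1) = -1 := by
      rw [pow_succ' 2 r, pow_mul, pow_two, fromBlocks_multiply]
      simp only [zero_mul, mul_zero, mul_one, one_mul, zero_add, add_zero]
      rw [fromBlocks_diagonal_pow, ih, ← fromBlocks_one, fromBlocks_neg, neg_zero]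
    rw [Jmat, ← coe_reindexAlgEquiv ℤ ℤ, ← map_pow, hblock, map_neg, map_one]

theorem invariantUnder_Cmat_iff {r : ℕ} {a : Fin (2 ^ r) → A} :
    InvariantUnder (Cmat r) a ↔ ∀ i j, a i = a j := by
  have hcol (j : Fin (2 ^ r)) : ∑ i, Cmat r i j • a i = a (j + 1) := by
    simp only [Cmat_apply, ite_smul, zero_smul, one_smul, neg_smul, ZModModule.neg_eq_self,
      ite_self, Finset.sum_ite_eq', Finset.mem_univ, if_true]
  simp only [InvariantUnder, hcol]
  refine ⟨fun h => ?_, fun h j => h _ _⟩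
  have hzero (m : ℕ) : a (Fin.ofNat (2 ^ r) m) = a 0 := by
    induction m with
    | zero => rfl
    | succ m ih =>
      rw [← ih, ← h (Fin.ofNat _ m)]
      congr 1
      simp [Fin.ext_iff, Fin.val_add]
  intro i j
  rw [← Fin.ofNat_val_eq_self i, ← Fin.ofNat_val_eq_self j, hzero, hzero]

theorem invariantUnder_Jmat_iff {r : ℕ} {a : Fin (2 ^ r) → A} :
    InvariantUnder (Jmat r) a ↔ ∀ i j, a i = a j := by
  induction r with
  | zero =>
    rw [Jmat_zero, invariantUnder_neg]
    exact iff_of_true (invariantUnder_one a)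
      fun i j => congrArg a (Subsingleton.elim (α := Fin 1) i j)
  | succ r ih =>
    rw [Jmat, invariantUnder_reindex]
    set e := (finSumFinEquiv (m := 2 ^ r) (n := 2 ^ r)).trans
      (finCongr (show 2 ^ r + 2 ^ r = 2 ^ (r + 1) by rw [pow_succ]; omega))
    have hblocks : InvariantUnder (fromBlocks 0 (Jmat r) 1 0) (a ∘ e) ↔
        (∀ j, a (e (.inr j)) = a (e (.inl j))) ∧
          ∀ j, ∑ i, Jmat r i j • a (e (.inl i)) = a (e (.inr j)) := by
      simp [InvariantUnder, Fintype.sum_sum_type, Matrix.one_apply]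
    rw [hblocks]
    have hconst := ih (a := fun i => a (e (.inl i)))
    constructor
    · rintro ⟨hswap, hJ⟩
      have hinl := hconst.1 fun j => (hJ j).trans (hswap j)
      have hval (x) : a (e x) = a (e (.inl 0)) := by
        rcases x with i | i
        exacts [hinl i 0, (hswap i).trans (hinl i 0)]
      intro i j
      simpa using (hval (e.symm i)).trans (hval (e.symm j)).symm
    · exact fun h => ⟨fun j => h _ _, fun j => (hconst.2 (fun _ _ => h _ _) j).trans (h _ _)⟩

variable {r : ℕ} {k k' : ℕ → ℕ} {j₁ : ℕ}

theorem blockMat_pow (hr : 2 ≤ r) (x : BlockIx r k k' j₁) :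
    blockMat r k k' j₁ x ^ 2 ^ r = 1 := by
  rcases x with ⟨i, _ | _⟩ | _ | _
  · exact pow_two_pow_eq_one_of_pow_eq_neg_one (Cmat_pow (i.val + 2)) (by omega)
  · exact pow_two_pow_eq_one_of_pow_eq_neg_one (Jmat_pow (i.val + 2)) (by omega)
  · exact pow_two_pow_eq_one_of_pow_eq_neg_one (Jmat_pow 1) (by omega)
  · exact one_pow _

theorem invariantUnder_blockMat_iff (x : BlockIx r k k' j₁)
    (a : Fin (blockSize r k k' j₁ x) → A) :
    InvariantUnder (blockMat r k k' j₁ x) a ↔ ∀ i j, a i = a j := by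
  rcases x with ⟨i, _ | _⟩ | _ | _
  · exact invariantUnder_Cmat_iff
  · exact invariantUnder_Jmat_iff
  · exact invariantUnder_Jmat_iff
  · exact iff_of_true (invariantUnder_one a)
      fun i j => congrArg a (Subsingleton.elim (α := Fin 1) i j)

theorem blockSize_pos (x : BlockIx r k k' j₁) : 0 < blockSize r k k' j₁ x := by
  rcases x with ⟨i, _⟩ | _ | _ <;> exact Nat.two_pow_pos _

theorem card_blockIx (hr : 2 ≤ r) {j : ℕ → ℕ} (hj : ∀ i, 2 ≤ i → i ≤ r - 1 → j i = k i + k' i) :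
    Fintype.card (BlockIx r k k' (j 1)) = (∑ i ∈ Finset.Icc 1 (r - 1), j i) + 1 := by
  obtain ⟨m, rfl⟩ := Nat.exists_eq_add_of_le' hr
  have hIcc : Finset.Icc 1 (m + 2 - 1) = Finset.Ico 1 (m + 2) := by
    ext i
    simp only [Finset.mem_Icc, Finset.mem_Ico]
    omega
  have hblocks :
      ∑ i : Fin (m + 2 - 2), (k (i + 2) + k' (i + 2)) = ∑ i ∈ Finset.range m, j (i + 2) := by
    rw [Finset.sum_range]
    exact Finset.sum_congr rfl fun i _ => (hj _ (by omega) (by omega)).symm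
  rw [hIcc, Finset.sum_Ico_eq_sum_range, Nat.add_succ_sub_one, Finset.sum_range_succ']
  simp only [Fintype.card_sum, Fintype.card_sigma, Fintype.card_fin, Fintype.card_unit,
    hblocks, add_comm 1, add_assoc, one_add_one_eq_two, zero_add]

end Blocks

theorem homs_to_Z2_of_Z2r_manifold_group_general {A : Type*} [AddCommGroup A] [Module (ZMod 2) A]
    (r : ℕ) (hr : 2 ≤ r) (k k' j : ℕ → ℕ)
    (hj : ∀ i, 2 ≤ i → i ≤ r - 1 → j i = k i + k' i)
    {ι : Type*} [Fintype ι] [DecidableEq ι] (l : ι) (B : GL ι ℤ)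
    (e : (Σ x : BlockIx r k k' (j 1), Fin (blockSize r k k' (j 1) x)) ≃ ι)
    (he : e ⟨Sum.inr (Sum.inr ()), ⟨0, Nat.one_pos⟩⟩ = l)
    (hB : B.1 = Matrix.reindex e e (Matrix.blockDiagonal' (blockMat r k k' (j 1)))) :
    Nonempty ((screwGroup B (Pi.single l ((2 : ℝ) ^ r)⁻¹) →* Multiplicative A) ≃*
      Multiplicative (Fin ((∑ i ∈ Finset.Icc 1 (r - 1), j i) + 1) → A)) := by
  let blk : ι → BlockIx r k k' (j 1) := fun i => (e.symm i).1
  have hfix : B.1 *ᵥ Pi.single l 1 = Pi.single l 1 := by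
    rw [hB, ← he]
    exact reindex_blockDiagonal'_mulVec_single e rfl _
  have hpow : B ^ 2 ^ r = 1 := Units.ext <| by
    rw [Units.val_pow_eq_pow_val, hB, reindex_blockDiagonal'_pow_eq_one e (blockMat_pow hr),
      Units.val_one]
  have htors (c : A) : 2 ^ r • c = 0 := by
    rw [← Nat.sub_add_cancel (one_le_two.trans hr), pow_succ, mul_smul,
      ZModModule.char_nsmul_eq_zero 2, smul_zero]
  have hblk : blk.Surjective := fun x => ⟨e ⟨x, ⟨0, blockSize_pos x⟩⟩, by simp [blk]⟩
  have hl (i : ι) (hi : blk i = blk l) : i = l := by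
    obtain ⟨⟨x, i⟩, rfl⟩ := e.surjective i
    obtain rfl : x = .inr (.inr ()) := by simpa [blk, ← he] using hi
    exact (congrArg (fun i => e ⟨_, i⟩) (Subsingleton.elim (α := Fin 1) _ _)).trans he
  have hinv (a : ι → A) : InvariantUnder B.1 a ↔ a.FactorsThrough blk := by
    rw [hB]
    exact invariantUnder_reindex_blockDiagonal'_iff e invariantUnder_blockMat_iff
  obtain ⟨F⟩ := screwGroup.nonempty_hom_mulEquiv (m := 2 ^ r) (d := ((2 : ℝ) ^ r)⁻¹) (by simp) hfix
    hpow htors hblk hl hinv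
  exact ⟨F.trans (LinearEquiv.funCongrLeft ℤ A
    (Fintype.equivFinOfCardEq (card_blockIx hr hj)).symm).toAddEquiv.toMultiplicative⟩

/-- **`H¹(M, ℤ₂)` (spin structures) of the `ℤ_{2^r}`-manifolds `M_{k(r)}` in the family `𝓕`.**
With `B` the block-diagonal matrix above (of size `n = 2^{r−1} j_{r−1} + ⋯ + 4 j_2 + 2 j_1 + 1`,
the final `1 × 1` block sitting in the last coordinate), and `Γ` the Bieberbach group generated
by `γ : x ↦ Bx + (1/2^r) eₙ` and the translations by `ℤ^n`, the group of all group
homomorphisms `Γ → ℤ/2ℤ` is isomorphic to `(ℤ/2ℤ)^{j_{r−1} + ⋯ + j_2 + j_1 + 1}`;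
in particular it has exactly `2^{j_{r−1} + ⋯ + j_1 + 1}` elements. -/
theorem homs_to_Z2_of_Z2r_manifold_group
    (r : ℕ) (hr : 2 ≤ r) (k k' j : ℕ → ℕ)
    (hj : ∀ i, 2 ≤ i → i ≤ r - 1 → j i = k i + k' i)
    (hj1 : Odd (j 1)) (hj1pos : 1 ≤ j 1) (hjr : 1 ≤ j (r - 1))
    (n : ℕ) (hn : n = (∑ i ∈ Finset.Icc 1 (r - 1), 2 ^ i * j i) + 1)
    (B : GL (Fin n) ℤ)
    (e : (Σ x : BlockIx r k k' (j 1), Fin (blockSize r k k' (j 1) x)) ≃ Fin n)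
    (he : e ⟨Sum.inr (Sum.inr ()), ⟨0, Nat.one_pos⟩⟩ = ⟨n - 1, by omega⟩)
    (hB : (B : Matrix (Fin n) (Fin n) ℤ) =
      Matrix.reindex e e (Matrix.blockDiagonal' (blockMat r k k' (j 1)))) :
    let Bℝ : GL (Fin n) ℝ := Units.map (RingHom.mapMatrix (Int.castRingHom ℝ)).toMonoidHom B
    let γ : (Fin n → ℝ) ≃ᵃ[ℝ] (Fin n → ℝ) :=
      (LinearMap.GeneralLinearGroup.toLinearEquiv
        (Matrix.GeneralLinearGroup.toLin Bℝ)).toAffineEquiv.trans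
        (AffineEquiv.constVAdd ℝ (Fin n → ℝ)
          (Pi.single (⟨n - 1, by omega⟩ : Fin n) (((2 : ℝ) ^ r)⁻¹)))
    let Γ : Subgroup ((Fin n → ℝ) ≃ᵃ[ℝ] (Fin n → ℝ)) :=
      Subgroup.closure ({γ} ∪
        Set.range (fun v : Fin n → ℤ =>
          AffineEquiv.constVAdd ℝ (Fin n → ℝ) (fun i => (v i : ℝ))))
    Nonempty ((↥Γ →* Multiplicative (ZMod 2)) ≃*
      Multiplicative (Fin ((∑ i ∈ Finset.Icc 1 (r - 1), j i) + 1) → ZMod 2)) ∧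
    Nat.card (↥Γ →* Multiplicative (ZMod 2)) =
      2 ^ ((∑ i ∈ Finset.Icc 1 (r - 1), j i) + 1) := by
  intro Bℝ γ Γ
  obtain ⟨F⟩ : Nonempty ((Γ →* Multiplicative (ZMod 2)) ≃* _) :=
    homs_to_Z2_of_Z2r_manifold_group_general (A := ZMod 2) r hr k k' j hj _ B e he hB
  refine ⟨⟨F⟩, ?_⟩
  rw [Nat.card_congr F.toEquiv, Nat.card_congr Multiplicative.toAdd, Nat.card_fun, Nat.card_zmod,
    Nat.card_fin]
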